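/- Define u(r,t) := (2/√π) ∫₀^{r/(2√t)} e^{−v²} dv for r ≥ 0, t > 0. Let 0 < ε < 1 and let Θ : ℝ → ℝ be a smooth function with Θ(r) = 1 for 0 ≤ r ≤ ε and Θ(r) = 0 for r ≥ 1, and let γ denote the Euler–Mascheroni constant. Then there exist constants C > 0 and t₀ > 0 such that for all 0 < t < t₀, | ∫₀^1 u(r,t) Θ(r) r^{−1} dr − [ ln ε + ∫_ε^1 Θ(r) r^{−1} dr + γ/2 − (1/2) ln t ] | ≤ C e^{−ε²/(8t)}. -/

import Mathlib

open MeasureTheory Real intervalIntegral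

noncomputable def auxG (x : ℝ) : ℝ := ∫ v in (0 : ℝ)..x, Real.exp (-v ^ 2)

lemma auxG_deriv (x : ℝ) : HasDerivAt auxG (Real.exp (-x ^ 2)) x := by
  have hc : Continuous fun v : ℝ => Real.exp (-v ^ 2) := by fun_prop
  exact intervalIntegral.integral_hasDerivAt_right (hc.intervalIntegrable _ _)
    hc.aestronglyMeasurable.stronglyMeasurableAtFilter hc.continuousAt

lemma auxG_zero : auxG 0 = 0 := by simp [auxG]

noncomputable def auxD : ℝ → ℝ := dslope auxG 0

lemma auxD_cont : Continuous auxD := by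
  rw [← continuousOn_univ]
  refine (continuousOn_dslope Filter.univ_mem).2 ⟨?_, (auxG_deriv 0).differentiableAt⟩
  exact fun x _ => (auxG_deriv x).continuousAt.continuousWithinAt

lemma auxD_mul (x : ℝ) : x * auxD x = auxG x := by
  have := sub_smul_dslope auxG 0 x
  simpa [auxG_zero, auxD] using this

lemma aux_int_gauss : Integrable (fun x : ℝ => Real.exp (-x ^ 2)) := by
  simpa using integrable_exp_neg_mul_sq (one_pos)

lemma aux_int_mul : Integrable (fun x : ℝ => x * Real.exp (-x ^ 2)) := by
  simpa using integrable_mul_exp_neg_mul_sq (one_pos)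

lemma aux_tail (A : ℝ) : ∫ x in Set.Ioi A, x * Real.exp (-x ^ 2) = Real.exp (-A ^ 2) / 2 := by
  have h := integral_Ioi_of_hasDerivAt_of_tendsto' (a := A) (m := 0)
    (f := fun x : ℝ => - Real.exp (-x ^ 2) / 2) (f' := fun x => x * Real.exp (-x ^ 2)) ?_
    aux_int_mul.integrableOn ?_
  · rw [h]; ring
  · intro x _
    have := (((hasDerivAt_pow 2 x).neg.exp).neg).div_const 2
    convert! this using 1
    simp; ring
  · have h1 : Filter.Tendsto (fun x : ℝ => -x ^ 2) Filter.atTop Filter.atBot :=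
      Filter.tendsto_neg_atTop_atBot.comp (Filter.tendsto_pow_atTop two_ne_zero)
    simpa using ((Real.tendsto_exp_atBot.comp h1).neg).div_const 2

lemma aux_loggauss_loc (A : ℝ) :
    IntervalIntegrable (fun x => Real.exp (-x ^ 2) * Real.log x) volume 0 A := by
  refine IntervalIntegrable.continuousOn_mul intervalIntegrable_log' ?_
  exact Continuous.continuousOn (by fun_prop)

lemma aux_loggauss_tail : IntegrableOn (fun x => Real.exp (-x ^ 2) * Real.log x) (Set.Ioi 1) := by
  refine Integrable.mono' aux_int_mul.integrableOn ?_ ?_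
  · exact (Measurable.aestronglyMeasurable (by fun_prop))
  · refine (ae_restrict_iff' measurableSet_Ioi).2 (Filter.Eventually.of_forall fun x hx => ?_)
    have hx : (1:ℝ) < x := hx
    have h1 := Real.log_nonneg hx.le
    have h2 := Real.log_le_self (by linarith : (0:ℝ) ≤ x)
    rw [norm_mul, Real.norm_of_nonneg (Real.exp_pos _).le, Real.norm_of_nonneg h1, mul_comm x]
    gcongr

lemma aux_loggauss : IntegrableOn (fun x => Real.exp (-x ^ 2) * Real.log x) (Set.Ioi 0) := by
  rw [← Set.Ioc_union_Ioi_eq_Ioi (zero_le_one)]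
  exact ((intervalIntegrable_iff_integrableOn_Ioc_of_le zero_le_one).1 (aux_loggauss_loc 1)).union
    aux_loggauss_tail

lemma aux_L : ∫ x in Set.Ioi (0:ℝ), Real.exp (-x ^ 2) * Real.log x =
    -(Real.sqrt π / 4) * (Real.eulerMascheroniConstant + 2 * Real.log 2) := by
  have h1 := Complex.hasDerivAt_GammaIntegral (s := (1/2 : ℂ)) (by norm_num)
  have h2 := Complex.hasDerivAt_Gamma_one_half
  have h3 : HasDerivAt Complex.GammaIntegral
      (-(Real.sqrt π : ℂ) * (Real.eulerMascheroniConstant + 2 * Complex.log 2)) (1/2) := by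
    refine h2.congr_of_eventuallyEq ?_
    have : IsOpen {s : ℂ | 0 < s.re} := isOpen_lt continuous_const Complex.continuous_re
    filter_upwards [this.mem_nhds (by norm_num : (0:ℝ) < (1/2 : ℂ).re)] with a ha
    exact (Complex.Gamma_eq_integral ha).symm
  have h4 := h1.unique h3
  have h5 : ∫ t in Set.Ioi (0:ℝ), t ^ (-(1/2) : ℝ) * (Real.log t * Real.exp (-t)) =
      -(Real.sqrt π) * (Real.eulerMascheroniConstant + 2 * Real.log 2) := by
    apply Complex.ofReal_injective
    rw [← integral_complex_ofReal]
    push_cast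
    rw [Complex.ofReal_log (by norm_num : (0:ℝ) ≤ 2)]
    push_cast
    rw [← h4]
    refine setIntegral_congr_fun measurableSet_Ioi fun t ht => ?_
    beta_reduce
    rw [Complex.ofReal_cpow (le_of_lt ht)]
    push_cast
    norm_num
  have h6 := integral_comp_rpow_Ioi_of_pos
    (g := fun t : ℝ => t ^ (-(1/2) : ℝ) * (Real.log t * Real.exp (-t))) (p := 2) two_pos
  rw [h5] at h6
  have h7 : ∫ x in Set.Ioi (0:ℝ), 4 * (Real.exp (-x ^ 2) * Real.log x) =
      -(Real.sqrt π) * (Real.eulerMascheroniConstant + 2 * Real.log 2) := by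
    rw [← h6]
    refine setIntegral_congr_fun measurableSet_Ioi fun x hx => ?_
    have hx : (0:ℝ) < x := hx
    simp only [smul_eq_mul]
    rw [← Real.rpow_mul hx.le, Real.log_rpow hx]
    norm_num
    rw [Real.rpow_neg_one]
    field_simp
    ring
  rw [MeasureTheory.integral_const_mul] at h7
  linarith

lemma aux_parts (A : ℝ) (hA : 0 < A) : ∫ x in (0:ℝ)..A, auxD x =
    auxG A * Real.log A - ∫ x in (0:ℝ)..A, Real.exp (-x ^ 2) * Real.log x := by
  have h := integral_eq_sub_of_hasDerivAt_of_le (f := fun x => auxG x * Real.log x)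
    (f' := fun x => Real.exp (-x ^ 2) * Real.log x + auxD x) hA.le ?_ ?_
    ((aux_loggauss_loc A).add (auxD_cont.intervalIntegrable _ _))
  · rw [intervalIntegral.integral_add (aux_loggauss_loc A) (auxD_cont.intervalIntegrable _ _)] at h
    simp only [auxG_zero] at h
    linarith
  · have : (fun x => auxG x * Real.log x) = fun x => auxD x * (x * Real.log x) := by
      ext x; rw [← auxD_mul]; ring
    rw [this]
    exact (auxD_cont.mul Real.continuous_mul_log).continuousOn
  · intro x hx
    have := (auxG_deriv x).mul (Real.hasDerivAt_log hx.1.ne')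
    convert! this using 1
    rw [← auxD_mul]
    have := hx.1.ne'
    field_simp

lemma auxG_compl (A : ℝ) (hA : 0 ≤ A) :
    auxG A + ∫ x in Set.Ioi A, Real.exp (-x ^ 2) = Real.sqrt π / 2 := by
  have h := integral_gaussian_Ioi 1
  simp only [neg_mul, one_mul, div_one] at h
  rw [← h, auxG]
  exact integral_interval_add_Ioi aux_int_gauss.integrableOn aux_int_gauss.integrableOn

lemma aux_gtail (A : ℝ) (hA : 1 ≤ A) :
    |auxG A - Real.sqrt π / 2| ≤ Real.exp (-A ^ 2) / 2 := by
  rw [← auxG_compl A (by linarith), ← aux_tail A]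
  have h0 : 0 ≤ ∫ x in Set.Ioi A, Real.exp (-x ^ 2) :=
    MeasureTheory.integral_nonneg fun x => (Real.exp_pos _).le
  rw [sub_add_cancel_left, abs_neg, abs_of_nonneg h0]
  refine setIntegral_mono_on aux_int_gauss.integrableOn aux_int_mul.integrableOn
    measurableSet_Ioi fun x hx => ?_
  have hx : A < x := hx
  have := Real.exp_pos (-x ^ 2)
  nlinarith

lemma aux_main (A : ℝ) (hA : 1 ≤ A) :
    |(∫ x in (0:ℝ)..A, auxD x) - (Real.sqrt π / 2 * Real.log A +
      (Real.sqrt π / 4) * (Real.eulerMascheroniConstant + 2 * Real.log 2))|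
      ≤ Real.exp (-A ^ 2) / 2 := by
  have hA0 : 0 < A := by linarith
  have hi : IntegrableOn (fun x => Real.exp (-x ^ 2) * Real.log x) (Set.Ioi A) :=
    aux_loggauss.mono_set (Set.Ioi_subset_Ioi hA0.le)
  have e1 := integral_interval_add_Ioi aux_loggauss hi
  rw [aux_L] at e1
  have e2 := auxG_compl A hA0.le
  have e3 : ∫ x in Set.Ioi A, Real.exp (-x ^ 2) * (Real.log x - Real.log A) =
      (∫ x in Set.Ioi A, Real.exp (-x ^ 2) * Real.log x) -
        (∫ x in Set.Ioi A, Real.exp (-x ^ 2)) * Real.log A := by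
    rw [← MeasureTheory.integral_mul_const, ← MeasureTheory.integral_sub hi
      (aux_int_gauss.integrableOn.mul_const _)]
    simp only [mul_sub]
  have e4 : (∫ x in (0:ℝ)..A, auxD x) - (Real.sqrt π / 2 * Real.log A +
      (Real.sqrt π / 4) * (Real.eulerMascheroniConstant + 2 * Real.log 2)) =
      ∫ x in Set.Ioi A, Real.exp (-x ^ 2) * (Real.log x - Real.log A) := by
    rw [aux_parts A hA0, e3, ← e2]
    linarith
  rw [e4, ← aux_tail A, ← Real.norm_eq_abs]
  refine norm_integral_le_of_norm_le aux_int_mul.integrableOn ?_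
  refine (ae_restrict_iff' measurableSet_Ioi).2 (Filter.Eventually.of_forall fun x hx => ?_)
  have hx : A < x := hx
  have h1 := Real.log_le_log hA0 hx.le
  have h2 := Real.log_le_self (by linarith : (0:ℝ) ≤ x)
  have h3 := Real.log_nonneg hA
  rw [norm_mul, Real.norm_of_nonneg (Real.exp_pos _).le, Real.norm_of_nonneg (by linarith),
    mul_comm x]
  gcongr
  linarith

/-- Small-time asymptotics of the half-line heat content with singular density `Θ(r) r^{-1}`
(the borderline case `α = 1`): a logarithmic term `-(1/2) ln t` appears. -/
theorem stmt_15 (u : ℝ → ℝ → ℝ)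
    (hu : ∀ r t : ℝ, 0 ≤ r → 0 < t →
      u r t = (2 / Real.sqrt π) * ∫ v in (0 : ℝ)..(r / (2 * Real.sqrt t)), Real.exp (-v ^ 2))
    (ε : ℝ) (hε0 : 0 < ε) (hε1 : ε < 1)
    (Θ : ℝ → ℝ) (hΘ : ContDiff ℝ (⊤ : ℕ∞) Θ)
    (hΘ1 : ∀ r : ℝ, 0 ≤ r → r ≤ ε → Θ r = 1)
    (hΘ0 : ∀ r : ℝ, 1 ≤ r → Θ r = 0) :
    ∃ C t₀ : ℝ, 0 < C ∧ 0 < t₀ ∧ ∀ t : ℝ, 0 < t → t < t₀ →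
      |(∫ r in Set.Ioo (0 : ℝ) 1, u r t * Θ r * r⁻¹) -
          (Real.log ε + (∫ r in Set.Ioo ε 1, Θ r * r⁻¹) +
            Real.eulerMascheroniConstant / 2 - (1 / 2) * Real.log t)|
        ≤ C * Real.exp (-ε ^ 2 / (8 * t)) := by
  have hΘc : Continuous Θ := hΘ.continuous
  obtain ⟨M, hM⟩ := (isCompact_Icc (a := ε) (b := 1)).exists_bound_of_continuousOn hΘc.continuousOn
  have hM0 : 0 ≤ M := (norm_nonneg _).trans (hM 1 ⟨hε1.le, le_rfl⟩)
  have hp : 0 < Real.sqrt π := Real.sqrt_pos.2 Real.pi_pos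
  obtain ⟨c, hc⟩ : ∃ c, c = 2 / Real.sqrt π := ⟨_, rfl⟩
  have hc0 : 0 < c := by rw [hc]; positivity
  have hcp : c * Real.sqrt π = 2 := by rw [hc]; field_simp
  refine ⟨c / 2 + c / 2 * M * ε⁻¹ * (1 - ε), ε ^ 2 / 4, ?_, by positivity, ?_⟩
  · have : 0 ≤ 1 - ε := by linarith
    positivity
  intro t ht0 ht
  have hs : 0 < Real.sqrt t := Real.sqrt_pos.2 ht0
  obtain ⟨k, hk⟩ : ∃ k, k = 1 / (2 * Real.sqrt t) := ⟨_, rfl⟩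
  have hk0 : 0 < k := by rw [hk]; positivity
  have hA2 : (k * ε) ^ 2 = ε ^ 2 / (4 * t) := by
    rw [hk, mul_pow, div_pow, mul_pow, Real.sq_sqrt ht0.le]; field_simp; norm_num
  have hA : 1 ≤ k * ε := by
    have : 1 ≤ (k * ε) ^ 2 := by
      rw [hA2, le_div_iff₀ (by positivity)]; linarith
    nlinarith [mul_pos hk0 hε0]
  have hexp : Real.exp (-(k * ε) ^ 2) ≤ Real.exp (-ε ^ 2 / (8 * t)) := by
    apply Real.exp_le_exp.2
    rw [hA2, neg_div]
    apply neg_le_neg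
    gcongr
    norm_num
  have hlog : Real.log (k * ε) = Real.log ε - Real.log 2 - 1 / 2 * Real.log t := by
    rw [Real.log_mul hk0.ne' hε0.ne', hk, one_div, Real.log_inv,
      Real.log_mul two_ne_zero hs.ne', Real.log_sqrt ht0.le]
    ring
  have hu' : ∀ r : ℝ, 0 < r → u r t * Θ r * r⁻¹ = c * (k * auxD (k * r)) * Θ r := by
    intro r hr
    rw [hu r t hr.le ht0, ← hc]
    have : r / (2 * Real.sqrt t) = k * r := by rw [hk]; ring
    rw [this]
    change c * auxG (k * r) * Θ r * r⁻¹ = _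
    rw [← auxD_mul]
    field_simp
  have hcont : Continuous fun r => c * (k * auxD (k * r)) * Θ r := by
    have := auxD_cont
    fun_prop
  have e1 : ∫ r in Set.Ioo (0 : ℝ) 1, u r t * Θ r * r⁻¹ =
      ∫ r in (0:ℝ)..1, c * (k * auxD (k * r)) * Θ r := by
    rw [intervalIntegral.integral_of_le zero_le_one, integral_Ioc_eq_integral_Ioo]
    exact setIntegral_congr_fun measurableSet_Ioo fun r hr => hu' r hr.1
  have e2 : ∫ r in Set.Ioo ε 1, Θ r * r⁻¹ = ∫ r in ε..1, Θ r * r⁻¹ := by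
    rw [intervalIntegral.integral_of_le hε1.le, integral_Ioc_eq_integral_Ioo]
  have e3 := integral_add_adjacent_intervals (hcont.intervalIntegrable (μ := volume) 0 ε)
    (hcont.intervalIntegrable ε 1)
  have e4 : ∫ r in (0:ℝ)..ε, c * (k * auxD (k * r)) * Θ r = c * ∫ x in (0:ℝ)..(k * ε), auxD x := by
    have h : ∫ r in (0:ℝ)..ε, c * (k * auxD (k * r)) * Θ r =
        ∫ r in (0:ℝ)..ε, c * (k * auxD (k * r)) := by
      refine intervalIntegral.integral_congr fun r hr => ?_
      rw [Set.uIcc_of_le hε0.le] at hr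
      beta_reduce
      rw [hΘ1 r hr.1 hr.2, mul_one]
    rw [h, intervalIntegral.integral_const_mul, intervalIntegral.integral_const_mul,
      mul_integral_comp_mul_left, mul_zero]
  have hint : IntervalIntegrable (fun r => Θ r * r⁻¹) volume ε 1 := by
    apply ContinuousOn.intervalIntegrable
    rw [Set.uIcc_of_le hε1.le]
    exact hΘc.continuousOn.mul (continuousOn_inv₀.mono fun r hr => (hε0.trans_le hr.1).ne')
  have e5 : |(∫ r in ε..1, c * (k * auxD (k * r)) * Θ r) - ∫ r in ε..1, Θ r * r⁻¹| ≤
      c / 2 * M * ε⁻¹ * Real.exp (-(k * ε) ^ 2) * (1 - ε) := by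
    rw [← intervalIntegral.integral_sub (hcont.intervalIntegrable _ _) hint, ← Real.norm_eq_abs]
    have := intervalIntegral.norm_integral_le_of_norm_le_const (a := ε) (b := 1)
      (f := fun r => c * (k * auxD (k * r)) * Θ r - Θ r * r⁻¹)
      (C := c / 2 * M * ε⁻¹ * Real.exp (-(k * ε) ^ 2)) ?_
    · rwa [abs_of_nonneg (by linarith : (0:ℝ) ≤ 1 - ε)] at this
    intro r hr
    rw [Set.uIoc_of_le hε1.le] at hr
    have hr0 : 0 < r := hε0.trans hr.1
    have hkr : k * ε ≤ k * r := by gcongr; exact hr.1.le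
    have h1 := aux_gtail (k * r) (hA.trans hkr)
    have h2 : Real.exp (-(k * r) ^ 2) ≤ Real.exp (-(k * ε) ^ 2) := by
      apply Real.exp_le_exp.2; apply neg_le_neg; gcongr
    have h3 : c * (k * auxD (k * r)) * Θ r - Θ r * r⁻¹ =
        c * (auxG (k * r) - Real.sqrt π / 2) * Θ r * r⁻¹ := by
      have : c * (auxG (k * r) - Real.sqrt π / 2) = c * auxG (k * r) - 1 := by linarith
      rw [this, ← auxD_mul]
      field_simp
    rw [h3, norm_mul, norm_mul, norm_mul, Real.norm_of_nonneg hc0.le,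
      Real.norm_of_nonneg (inv_pos.2 hr0).le, Real.norm_eq_abs (auxG _ - _)]
    have h4 := hM r ⟨hr.1.le, hr.2⟩
    have h5 : r⁻¹ ≤ ε⁻¹ := inv_anti₀ hε0 hr.1.le
    calc c * |auxG (k * r) - Real.sqrt π / 2| * ‖Θ r‖ * r⁻¹
        ≤ c * (Real.exp (-(k * ε) ^ 2) / 2) * M * ε⁻¹ := by
          gcongr
          linarith
      _ = _ := by ring
  have e6 := aux_main (k * ε) hA
  have e7 : |c * (∫ x in (0:ℝ)..(k * ε), auxD x) - (Real.log ε +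
      Real.eulerMascheroniConstant / 2 - (1 / 2) * Real.log t)| ≤
      c / 2 * Real.exp (-(k * ε) ^ 2) := by
    have h : c * (∫ x in (0:ℝ)..(k * ε), auxD x) - (Real.log ε +
      Real.eulerMascheroniConstant / 2 - (1 / 2) * Real.log t) =
      c * ((∫ x in (0:ℝ)..(k * ε), auxD x) - (Real.sqrt π / 2 * Real.log (k * ε) +
      (Real.sqrt π / 4) * (Real.eulerMascheroniConstant + 2 * Real.log 2))) := by
      rw [hlog]
      linear_combination ((Real.log ε - Real.log 2 - 1 / 2 * Real.log t) / 2 +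
        (Real.eulerMascheroniConstant + 2 * Real.log 2) / 4) * hcp
    rw [h, abs_mul, abs_of_pos hc0]
    calc _ ≤ c * (Real.exp (-(k * ε) ^ 2) / 2) := by gcongr
      _ = _ := by ring
  rw [e1, e2, ← e3, e4]
  have hK : 0 ≤ c / 2 + c / 2 * M * ε⁻¹ * (1 - ε) := by
    have : 0 ≤ 1 - ε := by linarith
    positivity
  calc _ = |(c * (∫ x in (0:ℝ)..(k * ε), auxD x) - (Real.log ε +
      Real.eulerMascheroniConstant / 2 - (1 / 2) * Real.log t)) +
      ((∫ r in ε..1, c * (k * auxD (k * r)) * Θ r) - ∫ r in ε..1, Θ r * r⁻¹)| := by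
        congr 1; ring
    _ ≤ _ := abs_add_le _ _
    _ ≤ _ := add_le_add e7 e5
    _ = (c / 2 + c / 2 * M * ε⁻¹ * (1 - ε)) * Real.exp (-(k * ε) ^ 2) := by ring
    _ ≤ _ := by gcongr
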